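/- Stirling-type asymptotic: for fixed reals a > 0, b, c, as n → ∞ through values making an + b√n + c a nonnegative integer, (an + b√n + c)! = √(2π) · (an)^{an + b√n + c + 1/2} · e^{b²/(2a) - an} · (1 + O(n^{-1/2})). -/

import Mathlib

open Filter

lemma st_fact (n : ℕ) (hn : 1 ≤ n) :
    |Real.log (Real.Gamma (n + 1)) - ((n + 1/2) * Real.log n - n + Real.log (2 * Real.pi) / 2)|
      ≤ 1 / n := by
  rw [Real.Gamma_nat_eq_factorial]
  have h0 : (0:ℝ) < n := by positivity
  have hlow := Stirling.le_log_factorial_stirling (n := n) (by omega)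
  have key : ∀ k : ℕ, Real.log (Stirling.stirlingSeq n) - Real.log (Stirling.stirlingSeq (n + k))
      ≤ 1 / (12 * n) - 1 / (12 * (n + k)) := by
    intro k
    induction k with
    | zero => simp
    | succ k ih =>
      have h := Stirling.log_stirlingSeq_sdiff_le (n + k)
      have e : (1:ℝ) / (12 * ((n + k : ℕ) : ℝ) * (((n + k : ℕ) : ℝ) + 1))
          = 1 / (12 * (n + k)) - 1 / (12 * (n + (k + 1))) := by
        push_cast
        field_simp
        ring
      rw [e] at h
      push_cast
      have : n + (k + 1) = n + k + 1 := by ring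
      rw [this]
      linarith
  have hpi : 0 < √Real.pi := by positivity
  have lim : Tendsto (fun k : ℕ => Real.log (Stirling.stirlingSeq n) - Real.log (Stirling.stirlingSeq (n + k)))
      atTop (nhds (Real.log (Stirling.stirlingSeq n) - Real.log (√Real.pi))) := by
    refine tendsto_const_nhds.sub ?_
    refine (Real.continuousAt_log hpi.ne').tendsto.comp ?_
    refine Stirling.tendsto_stirlingSeq_sqrt_pi.comp ?_
    exact tendsto_atTop_mono (fun k => Nat.le_add_left k n) tendsto_id
  have hup := le_of_tendsto lim (b := 1 / (12 * (n:ℝ))) (Eventually.of_forall fun k => by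
    have := key k
    have h2 : (0:ℝ) ≤ 1 / (12 * (n + k)) := by positivity
    linarith)
  rw [Stirling.log_stirlingSeq_formula, Real.log_sqrt Real.pi_pos.le, Real.log_mul (by norm_num) h0.ne',
    Real.log_div h0.ne' (Real.exp_pos 1).ne', Real.log_exp] at hup
  rw [Real.log_mul (by norm_num) Real.pi_pos.ne'] at hlow ⊢
  have h12 : 1 / (12 * (n:ℝ)) ≤ 1 / n := by
    apply one_div_le_one_div_of_le h0; linarith
  have hz : (0:ℝ) ≤ 1 / n := by positivity
  rw [abs_le]
  constructor <;> linarith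

lemma st_real (x : ℝ) (hx : 2 ≤ x) :
    |Real.log (Real.Gamma (x + 1)) - ((x + 1/2) * Real.log x - x + Real.log (2 * Real.pi) / 2)|
      ≤ 10 / x := by
  obtain ⟨N, s, hN, hs0, hs1, rfl⟩ : ∃ (N : ℕ) (s : ℝ), 1 ≤ N ∧ 0 < s ∧ s ≤ 1 ∧ x = N + s := by
    have h2 : 2 ≤ ⌈x⌉₊ := by
      have := Nat.le_ceil x
      exact_mod_cast hx.trans this
    refine ⟨⌈x⌉₊ - 1, x - (⌈x⌉₊ - 1 : ℕ), by omega, ?_, ?_, by ring⟩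
    · have := Nat.ceil_lt_add_one (by linarith : 0 ≤ x)
      rw [Nat.cast_sub (by omega)]
      push_cast; linarith
    · have := Nat.le_ceil x
      rw [Nat.cast_sub (by omega)]
      push_cast; linarith
  have hf := abs_le.1 (st_fact N hN)
  have hfe : ∀ {y : ℝ}, 0 < y → (Real.log ∘ Real.Gamma) (y + 1) = (Real.log ∘ Real.Gamma) y + Real.log y := by
    intro y hy
    simp only [Function.comp]
    rw [Real.Gamma_add_one hy.ne', Real.log_mul hy.ne' (Real.Gamma_pos_of_pos hy).ne']; ring
  have hle := Real.BohrMollerup.f_add_nat_le Real.convexOn_log_Gamma hfe (n := N + 1) (by omega) hs0 hs1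
  have hge := Real.BohrMollerup.f_add_nat_ge Real.convexOn_log_Gamma hfe (n := N + 1) (by omega) hs0
  simp only [Function.comp] at hle hge
  push_cast at hle hge
  have h0 : (1:ℝ) ≤ N := by exact_mod_cast hN
  have e1 : (N:ℝ) + 1 + s = N + s + 1 := by ring
  rw [e1] at hle hge
  have e2 : (N:ℝ) + 1 - 1 = N := by ring
  rw [e2] at hge
  -- logs
  have l1 : Real.log (N + 1) - Real.log N ≤ 1 / N := by
    rw [← Real.log_div (by positivity) (by positivity)]
    refine (Real.log_le_sub_one_of_pos (by positivity)).trans (le_of_eq ?_)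
    field_simp; ring
  have l2 : Real.log (N + s) - Real.log N ≤ s / N := by
    rw [← Real.log_div (by positivity) (by positivity)]
    refine (Real.log_le_sub_one_of_pos (by positivity)).trans (le_of_eq ?_)
    field_simp; ring
  have l3 : s / (N + s) ≤ Real.log (N + s) - Real.log N := by
    have : Real.log N - Real.log (N + s) ≤ - (s / (N + s)) := by
      rw [← Real.log_div (by positivity) (by positivity)]
      refine (Real.log_le_sub_one_of_pos (by positivity)).trans (le_of_eq ?_)
      field_simp; ring
    linarith
  have m1 : s * (Real.log (N + 1) - Real.log N) ≤ 1 / N := by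
    have : 0 ≤ Real.log (N + 1) - Real.log N := by
      have := Real.log_le_log (by positivity) (by linarith : (N:ℝ) ≤ N + 1); linarith
    nlinarith
  have m2 : (N + s + 1/2) * (Real.log (N + s) - Real.log N) - s ≤ 2 / N := by
    have := mul_le_mul_of_nonneg_left l2 (by positivity : 0 ≤ N + s + 1/2)
    have e : (N + s + 1/2) * (s / N) - s = (s^2 + s/2) / N := by field_simp; ring
    have : (s^2 + s/2) / N ≤ 2 / N := by gcongr; nlinarith
    linarith
  have m3 : 0 ≤ (N + s + 1/2) * (Real.log (N + s) - Real.log N) - s := by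
    have := mul_le_mul_of_nonneg_left l3 (by positivity : 0 ≤ N + s + 1/2)
    have e : (N + s + 1/2) * (s / (N + s)) - s = (s/2) / (N + s) := by field_simp; ring
    have : 0 ≤ (s/2) / (N + s) := by positivity
    linarith
  have m4 : 5 / (N:ℝ) ≤ 10 / (N + s) := by
    rw [div_le_div_iff₀ (by positivity) (by positivity)]; linarith
  have i1 : 2 / (N:ℝ) = 2 * (1 / N) := by ring
  have i2 : 5 / (N:ℝ) = 5 * (1 / N) := by ring
  have hz : (0:ℝ) ≤ 1 / N := by positivity
  rw [abs_le]
  constructor <;> linarith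

lemma log_taylor (w : ℝ) (hw : |w| ≤ 1 / 2) :
    |Real.log (1 + w) - w + w ^ 2 / 2| ≤ 2 * |w| ^ 3 := by
  have h := Real.abs_log_sub_add_sum_range_le (x := -w) (by rw [abs_neg]; linarith) 2
  rw [abs_neg] at h
  simp only [Finset.sum_range_succ, Finset.sum_range_zero] at h
  norm_num at h
  have e : -w + w ^ 2 / 2 + Real.log (1 + w) = Real.log (1 + w) - w + w ^ 2 / 2 := by ring
  rw [e] at h
  refine h.trans ?_
  rw [div_le_iff₀ (by linarith)]
  have : 0 ≤ |w| ^ 3 := by positivity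
  nlinarith

/-- The logarithm of the ratio, in terms of `v = n^{-1/2}`. -/
lemma log_ratio_bound (a b c : ℝ) (ha : 0 < a) : ∃ K : ℝ, ∀ᶠ v : ℝ in nhdsWithin 0 (Set.Ioi 0),
    0 < a / v ^ 2 + b / v + c ∧
    |Real.log (Real.Gamma (a / v ^ 2 + b / v + c + 1)) - (Real.log (2 * Real.pi) / 2 +
      (a / v ^ 2 + b / v + c + 1 / 2) * Real.log (a / v ^ 2) + (b ^ 2 / (2 * a) - a / v ^ 2))|
      ≤ K * v := by
  set e : ℝ → ℝ := fun v => b / a + c / a * v with he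
  have hec : Continuous e := by fun_prop
  set P : ℝ → ℝ := fun v => a / 2 * (2 * (b / a) * (c / a) + (c / a) ^ 2 * v) - a * (e v) ^ 3 / 2
    + e v / 2 - v * (e v) ^ 2 / 4 with hP
  set Q : ℝ → ℝ := fun v => 20 * v / a + |P v| +
    |a * (1 + v * e v) + v ^ 2 / 2| * (2 * |e v| ^ 3) with hQ
  have hQc : Continuous Q := by fun_prop
  refine ⟨Q 0 + 1, ?_⟩
  have c1 : ∀ᶠ v : ℝ in nhds 0, Q v < Q 0 + 1 :=
    hQc.continuousAt.eventually_lt continuousAt_const (by linarith)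
  have c2 : ∀ᶠ v : ℝ in nhds 0, |v * e v| < 1 / 2 := by
    have : Continuous fun v => |v * e v| := by fun_prop
    exact this.continuousAt.eventually_lt continuousAt_const (by simp)
  have c3 : ∀ᶠ v : ℝ in nhds 0, 4 * v ^ 2 < a := by
    have : Continuous fun v : ℝ => 4 * v ^ 2 := by fun_prop
    exact this.continuousAt.eventually_lt continuousAt_const (by simpa using ha)
  filter_upwards [c1.filter_mono nhdsWithin_le_nhds, c2.filter_mono nhdsWithin_le_nhds,
    c3.filter_mono nhdsWithin_le_nhds, self_mem_nhdsWithin] with v h1 h2 h3 hv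
  have hv : 0 < v := hv
  set w := v * e v with hw
  have hw2 := abs_lt.1 h2
  have hx : a / v ^ 2 + b / v + c = a / v ^ 2 * (1 + w) := by
    rw [hw, he]; field_simp; ring
  have hw1 : 0 < 1 + w := by linarith
  rw [hx]
  set x := a / v ^ 2 * (1 + w) with hxd
  have hav : 4 ≤ a / v ^ 2 := by rw [le_div_iff₀ (by positivity)]; linarith
  have hx2 : a / v ^ 2 / 2 ≤ x := by rw [hxd]; nlinarith
  have hL := st_real x (by linarith)
  refine ⟨by linarith, ?_⟩
  have hlogx : Real.log x = Real.log (a / v ^ 2) + Real.log (1 + w) :=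
    Real.log_mul (by positivity) hw1.ne'
  have hL2 : 10 / x ≤ v * (20 * v / a) := by
    have : 10 / x ≤ 10 / (a / v ^ 2 / 2) := by gcongr
    refine this.trans (le_of_eq ?_)
    field_simp; ring
  have hT := log_taylor w h2.le
  set r := Real.log (1 + w) - w + w ^ 2 / 2 with hr
  have hlog : Real.log (1 + w) = w - w ^ 2 / 2 + r := by rw [hr]; ring
  have hmain : (x + 1 / 2) * Real.log (1 + w) - x + a / v ^ 2 - b ^ 2 / (2 * a)
      = v * P v + (a * (1 + w) + v ^ 2 / 2) * (r / v ^ 2) := by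
    rw [hlog, hxd]
    clear_value r
    rw [hP, hw, he]
    field_simp
    ring
  have hrv : |r / v ^ 2| ≤ v * (2 * |e v| ^ 3) := by
    rw [abs_div, abs_of_pos (by positivity : 0 < v ^ 2), div_le_iff₀ (by positivity)]
    refine hT.trans (le_of_eq ?_)
    rw [hw, abs_mul, abs_of_pos hv]; ring
  calc _ = |(Real.log (Real.Gamma (x + 1)) -
          ((x + 1/2) * Real.log x - x + Real.log (2 * Real.pi) / 2)) + v * P v
          + (a * (1 + w) + v ^ 2 / 2) * (r / v ^ 2)| := by
        congr 1
        rw [hlogx]; linear_combination hmain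
    _ ≤ 10 / x + v * |P v| + |a * (1 + w) + v ^ 2 / 2| * (v * (2 * |e v| ^ 3)) := by
        refine (abs_add_three _ _ _).trans ?_
        rw [abs_mul v, abs_of_pos hv, abs_mul (a * (1 + w) + v ^ 2 / 2)]
        gcongr
    _ ≤ v * Q v := by
        rw [hQ]
        simp only [← hw]
        linarith
    _ ≤ _ := by
        rw [mul_comm]
        gcongr



/-- Stirling-type asymptotic: for fixed reals `a > 0`, `b`, `c`,
`Γ(an + b√n + c + 1) = √(2π) (an)^{an+b√n+c+1/2} e^{b²/(2a)-an} (1 + O(n^{-1/2}))`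
as `n → ∞`. -/
theorem stirling_shifted (a b c : ℝ) (ha : 0 < a) :
    (fun n : ℕ =>
        Real.Gamma (a * n + b * Real.sqrt n + c + 1) /
          (Real.sqrt (2 * Real.pi) *
            (a * n) ^ (a * n + b * Real.sqrt n + c + 1 / 2) *
            Real.exp (b ^ 2 / (2 * a) - a * n)) - 1)
      =O[atTop] fun n : ℕ => (n : ℝ) ^ (-(1 / 2) : ℝ) := by
  have hrhs : ∀ n : ℕ, (n : ℝ) ^ (-(1 / 2) : ℝ) = (√(n:ℝ))⁻¹ := by
    intro n
    rw [Real.rpow_neg (Nat.cast_nonneg n), Real.sqrt_eq_rpow]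
  simp only [hrhs]
  obtain ⟨K, hK⟩ := log_ratio_bound a b c ha
  have hlim : Tendsto (fun n : ℕ => (√(n:ℝ))⁻¹) atTop (nhdsWithin 0 (Set.Ioi 0)) :=
    tendsto_inv_atTop_nhdsGT_zero.comp
      (Real.tendsto_sqrt_atTop.comp tendsto_natCast_atTop_atTop)
  have hK1 : ∀ᶠ v : ℝ in nhdsWithin 0 (Set.Ioi 0), K * v < 1 := by
    have : Continuous fun v : ℝ => K * v := by fun_prop
    exact (this.continuousAt.eventually_lt continuousAt_const (by simp)).filter_mono
      nhdsWithin_le_nhds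
  refine Asymptotics.IsBigO.of_bound (2 * K) ?_
  filter_upwards [hlim.eventually hK, hlim.eventually hK1, eventually_gt_atTop 0] with n h1 h2 hn
  have hn : (0:ℝ) < n := by exact_mod_cast hn
  have hs : 0 < √(n:ℝ) := Real.sqrt_pos.2 hn
  have e1 : a / (√(n:ℝ))⁻¹ ^ 2 = a * n := by
    rw [inv_pow, Real.sq_sqrt hn.le, div_inv_eq_mul]
  rw [e1, div_inv_eq_mul] at h1
  obtain ⟨hpos, hb⟩ := h1
  set x := a * n + b * √(n:ℝ) + c with hx
  have hG : 0 < Real.Gamma (x + 1) := Real.Gamma_pos_of_pos (by linarith)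
  have han : 0 < a * (n:ℝ) := by positivity
  set E := Real.log (Real.Gamma (x + 1)) - (Real.log (2 * Real.pi) / 2 +
      (x + 1 / 2) * Real.log (a * n) + (b ^ 2 / (2 * a) - a * n)) with hE
  have hratio : Real.Gamma (x + 1) / (√(2 * Real.pi) * (a * n) ^ (x + 1 / 2) *
      Real.exp (b ^ 2 / (2 * a) - a * n)) = Real.exp E := by
    rw [hE, Real.exp_sub (Real.log (Real.Gamma (x + 1))), Real.exp_log hG, Real.exp_add, Real.exp_add,
      ← Real.log_sqrt (by positivity), Real.exp_log (by positivity),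
      Real.rpow_def_of_pos han, mul_comm (Real.log (a * n))]
  rw [hratio, Real.norm_eq_abs, Real.norm_eq_abs, abs_of_pos (inv_pos.2 hs)]
  have := Real.abs_exp_sub_one_le (hb.trans h2.le)
  linarith
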